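/- arXiv:1712.04732 — 2 statements merged into one kernel-verified Lean document; each statement's English description precedes it below -/
import Mathlib

section
/- Let ξ > 0. For every x ∈ ℝ³ with x ≠ 0, the function ψ(x) = erfc(ξ‖x‖)/‖x‖ satisfies Δψ(x) = 4π · ξ³ π^{−3/2} e^{−ξ²‖x‖²}; i.e. away from the origin the real-space part of the Ewald-decomposed Coulomb potential has Laplacian equal to 4π times the Gaussian screening function. -/
/-!
The function `y ↦ erfc (ξ‖y‖) / ‖y‖` is radial, and a radial function `φ(‖y‖)` on `ℝ³` has
Laplacian `φ''(r) + (2 / r) φ'(r)` at a point with `r = ‖x‖ > 0` (`laplacian3_radial`). For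
`φ(r) = erfc (ξ r) / r` this equals `(1 / r) (r φ)'' = (1 / r) (d/dr)² erfc (ξ r)`, so all terms
still containing `erfc` cancel. Since `erfc' = -(2 / √π) e^{-r²}` by the fundamental theorem of
calculus, what remains is `(4 ξ³ / √π) e^{-ξ² r²}`, and `4 / √π = 4 π · π^{-3/2}`.
-/

open Real

/-- The error function `erf(x) = (2/√π) ∫_0^x e^{-t²} dt`. -/
noncomputable def erf (x : ℝ) : ℝ :=
  (2 / Real.sqrt π) * ∫ t in (0 : ℝ)..x, Real.exp (-t ^ 2)

/-- The complementary error function `erfc(x) = 1 - erf(x)`. -/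
noncomputable def erfc (x : ℝ) : ℝ := 1 - erf x

/-- The Laplacian of `f : ℝ³ → ℝ` at `x`: the sum of the second partial
derivatives along the coordinate directions. -/
noncomputable def laplacian3 (f : EuclideanSpace ℝ (Fin 3) → ℝ)
    (x : EuclideanSpace ℝ (Fin 3)) : ℝ :=
  ∑ i : Fin 3,
    fderiv ℝ (fun y => fderiv ℝ f y (EuclideanSpace.single i 1)) x (EuclideanSpace.single i 1)

lemma hasDerivAt_erfc (x : ℝ) :
    HasDerivAt erfc (-(2 / √π * Real.exp (-x ^ 2))) x := by
  have hc : Continuous fun t : ℝ => Real.exp (-t ^ 2) := by fun_prop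
  exact ((hc.integral_hasStrictDerivAt 0 x).hasDerivAt.const_mul (2 / √π)).const_sub 1

lemma hasFDerivAt_norm_euclidean {x : EuclideanSpace ℝ (Fin 3)} (hx : x ≠ 0) :
    HasFDerivAt (fun y : EuclideanSpace ℝ (Fin 3) => ‖y‖) (‖x‖⁻¹ • innerSL ℝ x) x := by
  have hn : ‖x‖ ≠ 0 := norm_ne_zero_iff.2 hx
  have h := (hasStrictFDerivAt_norm_sq x).hasFDerivAt.sqrt (pow_ne_zero 2 hn)
  simp only [Real.sqrt_sq (norm_nonneg _)] at h
  refine h.congr_fderiv ?_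
  rw [two_nsmul, ← two_smul ℝ, smul_smul]
  congr 1
  field_simp

lemma fderiv_radial_single {φ : ℝ → ℝ} {a : ℝ} {x : EuclideanSpace ℝ (Fin 3)} (hx : x ≠ 0)
    (hφ : HasDerivAt φ a ‖x‖) (i : Fin 3) :
    fderiv ℝ (fun y : EuclideanSpace ℝ (Fin 3) => φ ‖y‖) x (EuclideanSpace.single i 1) =
      a / ‖x‖ * x i := by
  have h := hφ.comp_hasFDerivAt x (hasFDerivAt_norm_euclidean hx)
  have h' := h.fderiv
  simp only [Function.comp_def] at h'
  rw [h']
  simp [EuclideanSpace.inner_single_right]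
  ring

/-- The three-dimensional Laplacian in polar form: `Δ(φ(‖·‖)) = φ'' + (2 / r) φ'` away from the
origin. Here `φ₁` is the derivative of `φ` on `(0, ∞)` and `b` that of `φ₁` at `‖x‖`. -/
lemma laplacian3_radial {φ φ₁ : ℝ → ℝ} {b : ℝ} {x : EuclideanSpace ℝ (Fin 3)} (hx : x ≠ 0)
    (hφ : ∀ r, 0 < r → HasDerivAt φ (φ₁ r) r) (hφ₁ : HasDerivAt φ₁ b ‖x‖) :
    laplacian3 (fun y => φ ‖y‖) x = b + 2 / ‖x‖ * φ₁ ‖x‖ := by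
  have hn : ‖x‖ ≠ 0 := norm_ne_zero_iff.2 hx
  have hq : HasDerivAt (fun r => φ₁ r / r) ((b * ‖x‖ - φ₁ ‖x‖ * 1) / ‖x‖ ^ 2) ‖x‖ :=
    hφ₁.div (hasDerivAt_id _) hn
  have key : ∀ i : Fin 3,
      fderiv ℝ (fun y => fderiv ℝ (fun z : EuclideanSpace ℝ (Fin 3) => φ ‖z‖) y
        (EuclideanSpace.single i 1)) x (EuclideanSpace.single i 1) =
      (b * ‖x‖ - φ₁ ‖x‖) / ‖x‖ ^ 3 * x i ^ 2 + φ₁ ‖x‖ / ‖x‖ := by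
    intro i
    have hev : (fun y => fderiv ℝ (fun z : EuclideanSpace ℝ (Fin 3) => φ ‖z‖) y
        (EuclideanSpace.single i 1)) =ᶠ[nhds x] fun y => φ₁ ‖y‖ / ‖y‖ * y i := by
      filter_upwards [isOpen_ne.mem_nhds hx] with y hy
      exact fderiv_radial_single hy (hφ _ (norm_pos_iff.2 hy)) i
    rw [hev.fderiv_eq]
    have hd : HasFDerivAt (fun y : EuclideanSpace ℝ (Fin 3) => φ₁ ‖y‖ / ‖y‖) _ x :=
      hq.comp_hasFDerivAt x (hasFDerivAt_norm_euclidean hx)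
    have hp : HasFDerivAt (fun y : EuclideanSpace ℝ (Fin 3) => y i)
        (EuclideanSpace.proj i : EuclideanSpace ℝ (Fin 3) →L[ℝ] ℝ) x :=
      (EuclideanSpace.proj i : EuclideanSpace ℝ (Fin 3) →L[ℝ] ℝ).hasFDerivAt
    rw [(hd.fun_mul hp).fderiv]
    simp [EuclideanSpace.inner_single_right]
    field_simp
    ring
  have hsum : ‖x‖ ^ 2 = ∑ i : Fin 3, x i ^ 2 := EuclideanSpace.real_norm_sq_eq x
  unfold laplacian3
  rw [Finset.sum_congr rfl fun i _ => key i, Finset.sum_add_distrib, ← Finset.mul_sum, ← hsum]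
  simp
  field_simp
  ring

/-- For `x ≠ 0`, `ψ(x) = erfc(ξ‖x‖)/‖x‖` satisfies `Δψ(x) = 4π ξ³ π^{-3/2} e^{-ξ²‖x‖²}`. -/
theorem laplacian_erfc_potential (ξ : ℝ) (hξ : 0 < ξ)
    (x : EuclideanSpace ℝ (Fin 3)) (hx : x ≠ 0) :
    laplacian3 (fun y => erfc (ξ * ‖y‖) / ‖y‖) x =
      4 * π * (ξ ^ 3 * π ^ (-(3 : ℝ) / 2) * Real.exp (-ξ ^ 2 * ‖x‖ ^ 2)) := by
  have hn : ‖x‖ ≠ 0 := norm_ne_zero_iff.2 hx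
  have he : ∀ r, HasDerivAt (fun r => erfc (ξ * r))
      (-(2 / √π * Real.exp (-(ξ * r) ^ 2)) * (ξ * 1)) r := fun r =>
    (hasDerivAt_erfc (ξ * r)).comp r ((hasDerivAt_id r).const_mul ξ)
  have hg : ∀ r, HasDerivAt (fun r => -(2 / √π * Real.exp (-(ξ * r) ^ 2)) * (ξ * 1))
      (4 * ξ ^ 3 / √π * r * Real.exp (-(ξ * r) ^ 2)) r := by
    intro r
    have h1 : HasDerivAt (fun r : ℝ => -(ξ * r) ^ 2) _ r :=
      (((hasDerivAt_id r).const_mul ξ).pow 2).neg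
    refine ((h1.exp.const_mul (2 / √π)).neg.mul_const (ξ * 1)).congr_deriv ?_
    simp
    ring
  have h1 : ∀ r, 0 < r → HasDerivAt (fun r => erfc (ξ * r) / r)
      ((-(2 / √π * Real.exp (-(ξ * r) ^ 2)) * (ξ * 1) * r - erfc (ξ * r) * 1) / r ^ 2) r :=
    fun r hr => (he r).div (hasDerivAt_id r) hr.ne'
  have h2 := (((hg ‖x‖).mul (hasDerivAt_id ‖x‖)).sub ((he ‖x‖).mul_const 1)).div
    ((hasDerivAt_id ‖x‖).pow 2) (pow_ne_zero 2 hn)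
  have hpi : π * π ^ (-(3 : ℝ) / 2) = 1 / √π := by
    rw [Real.sqrt_eq_rpow, one_div, ← Real.rpow_neg pi_pos.le]
    nth_rewrite 1 [← Real.rpow_one π]
    rw [← Real.rpow_add pi_pos]
    norm_num
  have hs : √π ≠ 0 := (Real.sqrt_pos.2 pi_pos).ne'
  have hrhs : 4 * π * (ξ ^ 3 * π ^ (-(3 : ℝ) / 2) * Real.exp (-ξ ^ 2 * ‖x‖ ^ 2)) =
      4 * ξ ^ 3 * (1 / √π) * Real.exp (-(ξ * ‖x‖) ^ 2) := by
    rw [← hpi, show -ξ ^ 2 * ‖x‖ ^ 2 = -(ξ * ‖x‖) ^ 2 by ring]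
    ring
  rw [laplacian3_radial (φ := fun r => erfc (ξ * r) / r) hx h1 h2, hrhs]
  simp
  field_simp
  ring
end

section
/- For all real a > 0 and all real b, ∫_0^∞ e^{−a k²} (sin(bk)/k) dk = (π/2) · erf(b/(2√a)). -/
/-!
Both sides vanish at `b = 0`, so it suffices that their derivatives in `b` agree. Differentiating
the left side under the integral sign removes the factor `1 / k` and leaves the Gaussian cosine
integral `∫_0^∞ e^{-a k²} cos (b k) dk = √(π / a) / 2 · e^{-b² / (4a)}`, which is half the real part
of the Fourier transform of a Gaussian. The derivative of the right side is the same by the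
fundamental theorem of calculus. The differentiated integrands
are dominated by the integrable function `e^{-a k²}`, uniformly in `b`.
-/

open MeasureTheory Real

/-- Half of the real part of the Fourier transform of the Gaussian `e^{-a k²}`. -/
lemma integral_Ioi_exp_mul_cos (a b : ℝ) (ha : 0 < a) :
    ∫ k in Set.Ioi (0 : ℝ), Real.exp (-a * k ^ 2) * Real.cos (b * k) =
      √π / (2 * √a) * Real.exp (-b ^ 2 / (4 * a)) := by
  have h1 := fourierIntegral_gaussian (b := (a : ℂ)) (by simpa using ha) (b : ℂ)
  have hint : Integrable fun x : ℝ =>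
      Complex.exp (Complex.I * b * x) * Complex.exp (-a * x ^ 2) := by
    refine (integrable_exp_neg_mul_sq ha).mono' (by fun_prop) (.of_forall fun x => ?_)
    rw [norm_mul, Complex.norm_exp, Complex.norm_exp]
    simp [← Complex.ofReal_pow]
  have h2 : ∫ x : ℝ, Real.exp (-a * x ^ 2) * Real.cos (b * x) =
      √(π / a) * Real.exp (-b ^ 2 / (4 * a)) := by
    have h3 := congrArg Complex.re h1
    have h4 := integral_re hint
    simp only [RCLike.re_eq_complex_re] at h4
    rw [← h4] at h3
    convert h3 using 1
    · congr 1
      ext x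
      rw [show Complex.I * b * x = ((b * x : ℝ) : ℂ) * Complex.I by push_cast; ring,
        show -(a : ℂ) * (x : ℂ) ^ 2 = ((-a * x ^ 2 : ℝ) : ℂ) by push_cast; ring,
        ← Complex.ofReal_exp, Complex.re_mul_ofReal, Complex.exp_ofReal_mul_I_re]
      ring
    · rw [show ((π : ℂ) / a) ^ (1 / 2 : ℂ) = ((√(π / a) : ℝ) : ℂ) by
          rw [Real.sqrt_eq_rpow, Complex.ofReal_cpow (by positivity)]
          push_cast; rfl,
        show -(b : ℂ) ^ 2 / (4 * a) = ((-b ^ 2 / (4 * a) : ℝ) : ℂ) by push_cast; ring,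
        ← Complex.ofReal_exp, ← Complex.ofReal_mul, Complex.ofReal_re]
  have h5 := integral_comp_abs (f := fun x : ℝ => Real.exp (-a * x ^ 2) * Real.cos (b * x))
  have h6 : ∀ x : ℝ, Real.cos (b * |x|) = Real.cos (b * x) := fun x => by
    rcases abs_choice x with h | h <;> simp [h]
  simp only [sq_abs, h6] at h5
  rw [h2, Real.sqrt_div pi_pos.le] at h5
  have : √π / (2 * √a) = √π / √a / 2 := by rw [div_div, mul_comm]
  rw [this]
  linarith

lemma hasDerivAt_integral_exp_mul_sin_div (a b : ℝ) (ha : 0 < a) :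
    HasDerivAt
      (fun b => ∫ k in Set.Ioi (0 : ℝ), Real.exp (-a * k ^ 2) * (Real.sin (b * k) / k))
      (√π / (2 * √a) * Real.exp (-b ^ 2 / (4 * a))) b := by
  rw [← integral_Ioi_exp_mul_cos a b ha]
  have hg : IntegrableOn (fun k : ℝ => Real.exp (-a * k ^ 2)) (Set.Ioi 0) :=
    (integrable_exp_neg_mul_sq ha).integrableOn
  have hm : ∀ b : ℝ, AEStronglyMeasurable
      (fun k : ℝ => Real.exp (-a * k ^ 2) * (Real.sin (b * k) / k))
      (volume.restrict (Set.Ioi 0)) := fun b =>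
    Measurable.aestronglyMeasurable (by fun_prop)
  refine (hasDerivAt_integral_of_dominated_loc_of_deriv_le
    (F' := fun b k => Real.exp (-a * k ^ 2) * Real.cos (b * k))
    (bound := fun k => Real.exp (-a * k ^ 2)) Filter.univ_mem
    (.of_forall hm) ?_ (by fun_prop) ?_ hg ?_).2
  · refine (hg.mul_const |b|).mono' (hm b) ?_
    filter_upwards [ae_restrict_mem measurableSet_Ioi] with k (hk : 0 < k)
    rw [norm_mul, Real.norm_of_nonneg (Real.exp_pos _).le, Real.norm_eq_abs, abs_div]
    gcongr
    rw [div_le_iff₀ (by positivity), ← abs_mul]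
    exact Real.abs_sin_le_abs
  · refine .of_forall fun k x _ => ?_
    rw [norm_mul, Real.norm_of_nonneg (Real.exp_pos _).le, Real.norm_eq_abs]
    exact mul_le_of_le_one_right (Real.exp_pos _).le (Real.abs_cos_le_one _)
  · filter_upwards [ae_restrict_mem measurableSet_Ioi] with k (hk : 0 < k) x _
    have := ((((hasDerivAt_id x).mul_const k).sin).div_const k).const_mul (Real.exp (-a * k ^ 2))
    refine this.congr_deriv ?_
    simp [hk.ne']

lemma hasDerivAt_erf (x : ℝ) : HasDerivAt erf (2 / √π * Real.exp (-x ^ 2)) x := by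
  have hc : Continuous fun t : ℝ => Real.exp (-t ^ 2) := by fun_prop
  exact (hc.integral_hasStrictDerivAt 0 x).hasDerivAt.const_mul _

/-- For `a > 0` and `b ∈ ℝ`, `∫_0^∞ e^{-a k²} (sin(bk)/k) dk = (π/2) erf(b/(2√a))`. -/
theorem integral_exp_mul_sin_div (a b : ℝ) (ha : 0 < a) :
    ∫ k in Set.Ioi (0 : ℝ), Real.exp (-a * k ^ 2) * (Real.sin (b * k) / k) =
      π / 2 * erf (b / (2 * Real.sqrt a)) := by
  have hR : ∀ b : ℝ, HasDerivAt (fun b => π / 2 * erf (b / (2 * √a)))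
      (√π / (2 * √a) * Real.exp (-b ^ 2 / (4 * a))) b := fun b => by
    have h := ((hasDerivAt_erf (b / (2 * √a))).comp b
      ((hasDerivAt_id b).div_const (2 * √a))).const_mul (π / 2)
    refine h.congr_deriv ?_
    have hs : 0 < √a := Real.sqrt_pos.2 ha
    have hp : 0 < √π := Real.sqrt_pos.2 pi_pos
    rw [show -(b / (2 * √a)) ^ 2 = -b ^ 2 / (4 * a) by
      rw [div_pow, mul_pow, Real.sq_sqrt ha.le]; ring]
    field_simp
    rw [Real.sq_sqrt pi_pos.le]
  have hD := fun b => (hasDerivAt_integral_exp_mul_sin_div a b ha).sub (hR b)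
  have hconst := is_const_of_deriv_eq_zero (fun b => (hD b).differentiableAt)
    (fun b => by rw [(hD b).deriv, sub_self]) b 0
  simpa [erf, sub_eq_zero] using hconst
end
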